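/- arXiv:2601.13363 — 2 statements merged into one kernel-verified Lean document; each statement's English description precedes it below -/
import Mathlib

section
/- Let (X,d) be a totally bounded UT-space. Then every open ball of (X,d) is a centered sphere in (X,d). -/
open scoped Classical ENNReal

universe u

/-- The ultrametric `d_l` generated by a labeling `l` on the vertex set of a tree `G`:
for `u ≠ v` it is the maximum of `l` over the vertices of the unique path joining
`u` and `v`, and `d_l(u,u) = 0`. -/
noncomputable def dl {V : Type*} {G : SimpleGraph V} (hG : G.IsTree) (l : V → ℝ)
    (u v : V) : ℝ :=
  if u = v then 0
  else (((hG.existsUnique_path u v).exists.choose.support).map l).foldr max (l u)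

/-- `(X,d)` is a **UT-space**: it is isometric to `(V(T), d_l)` for some labeled tree
`(T,l)` with a non-degenerate labeling `l : V(T) → [0,∞)`. -/
def IsUTSpace (X : Type u) [MetricSpace X] : Prop :=
  ∃ (V : Type u) (G : SimpleGraph V) (hG : G.IsTree) (l : V → ℝ),
    (∀ v, 0 ≤ l v) ∧
    (∀ u v : V, G.Adj u v → 0 < max (l u) (l v)) ∧
    ∃ Φ : X → V, Function.Bijective Φ ∧ ∀ x y : X, dist x y = dl hG l (Φ x) (Φ y)

/-- The distance set `D(X) = {d(x,y) : x,y ∈ X}`, with distances recorded as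
extended non-negative reals. -/
def distSet (X : Type*) [MetricSpace X] : Set ℝ≥0∞ :=
  {t | ∃ x y : X, edist x y = t}

/-- The center of distances `C(X) = {t ∈ D(X) : ∀ p ∈ X, ∃ x ∈ X, d(p,x) = t}`. -/
def centerOfDistances (X : Type*) [MetricSpace X] : Set ℝ≥0∞ :=
  {t | t ∈ distSet X ∧ ∀ p : X, ∃ x : X, edist p x = t}

/-- A subset `S` of a metric space is a **centered sphere** if there are `c ∈ S` and
`r ∈ [0,∞)` with `S = {x : d(x,c) = r} ∪ {c}`. -/
def IsCenteredSphere {X : Type*} [MetricSpace X] (S : Set X) : Prop :=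
  ∃ c ∈ S, ∃ r : ℝ, 0 ≤ r ∧ S = {x : X | dist x c = r} ∪ {c}

theorem foldr_max_ge (L : List ℝ) (a : ℝ) : a ≤ L.foldr max a ∧ ∀ x ∈ L, x ≤ L.foldr max a := by
  induction L with
  | nil => simp
  | cons b L ih =>
    refine ⟨le_trans ih.1 (le_max_right _ _), ?_⟩
    intro x hx
    rcases List.mem_cons.1 hx with rfl | hx
    · exact le_max_left _ _
    · exact le_trans (ih.2 x hx) (le_max_right _ _)

theorem foldr_max_mem (L : List ℝ) (a : ℝ) : L.foldr max a = a ∨ L.foldr max a ∈ L := by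
  induction L with
  | nil => simp
  | cons b L ih =>
    rcases max_choice b (L.foldr max a) with h | h
    · right; rw [List.foldr_cons, h]; simp
    · rw [List.foldr_cons, h]
      rcases ih with ih | ih
      · exact Or.inl ih
      · exact Or.inr (List.mem_cons_of_mem _ ih)

theorem dl_spec {V : Type*} {G : SimpleGraph V} (hG : G.IsTree) (l : V → ℝ)
    (u v : V) (huv : u ≠ v) : ∃ p : G.Walk u v, p.IsPath ∧
      (∀ w ∈ p.support, l w ≤ dl hG l u v) ∧ ∃ w ∈ p.support, dl hG l u v = l w := by
  refine ⟨(hG.existsUnique_path u v).exists.choose,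
    (hG.existsUnique_path u v).exists.choose_spec, ?_, ?_⟩
  · intro w hw
    rw [dl, if_neg huv]
    exact (foldr_max_ge _ _).2 _ (List.mem_map_of_mem hw)
  · rw [dl, if_neg huv]
    rcases foldr_max_mem
      (((hG.existsUnique_path u v).exists.choose.support).map l) (l u) with h | h
    · exact ⟨u, SimpleGraph.Walk.start_mem_support _, h⟩
    · obtain ⟨w, hw, e⟩ := List.mem_map.1 h
      exact ⟨w, hw, e.symm⟩

theorem dl_le {V : Type*} {G : SimpleGraph V} (hG : G.IsTree) (l : V → ℝ)
    (u v : V) (huv : u ≠ v) (q : G.Walk u v) (M : ℝ) (hM : ∀ w ∈ q.support, l w ≤ M) :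
    dl hG l u v ≤ M := by
  obtain ⟨p, hp, -, w, hw, e⟩ := dl_spec hG l u v huv
  have : p = q.bypass := (hG.existsUnique_path u v).unique hp q.bypass_isPath
  rw [e]
  apply hM
  subst this
  exact q.support_bypass_subset_support hw

/-- Let `(X,d)` be a totally bounded UT-space.  Then every open
ball of `(X,d)` is a centered sphere in `(X,d)`. -/
theorem ball_isCenteredSphere_of_totallyBounded_UT
    {X : Type u} [MetricSpace X] (hX : IsUTSpace X)
    (htb : TotallyBounded (Set.univ : Set X)) :
    ∀ (c : X) (r : ℝ), 0 < r → IsCenteredSphere (Metric.ball c r) := by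
  obtain ⟨V, G, hG, l, hl0, -, Φ, hΦ, hd⟩ := hX
  have hne : ∀ x y, x ≠ y → Φ x ≠ Φ y := fun x y h => hΦ.1.ne h
  have hA : ∀ x y, x ≠ y → l (Φ x) ≤ dist x y := by
    intro x y h
    obtain ⟨p, -, h1, -⟩ := dl_spec hG l _ _ (hne x y h)
    rw [hd]
    exact h1 _ p.start_mem_support
  have hB : ∀ x y, x ≠ y → ∃ w, l (Φ w) = dist x y ∧ dist x w ≤ dist x y := by
    intro x y h
    obtain ⟨p, -, h1, w, hw, e⟩ := dl_spec hG l _ _ (hne x y h)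
    obtain ⟨w, rfl⟩ := hΦ.2 w
    refine ⟨w, by rw [hd, e], ?_⟩
    by_cases hxw : x = w
    · subst hxw; simp
    · rw [hd x w, hd x y]
      exact dl_le hG l _ _ (hne _ _ hxw) (p.takeUntil _ hw) _
        (fun z hz => h1 z (p.support_takeUntil_subset_support hw hz))
  have hC : ∀ x y z : X, dist x z ≤ max (dist x y) (dist y z) := by
    intro x y z
    by_cases h1 : x = y
    · subst h1; simp
    by_cases h2 : y = z
    · subst h2; simp
    by_cases h3 : x = z
    · subst h3; simp
    obtain ⟨p, -, hp, -⟩ := dl_spec hG l _ _ (hne x y h1)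
    obtain ⟨q, -, hq, -⟩ := dl_spec hG l _ _ (hne y z h2)
    rw [hd x z, hd x y, hd y z]
    apply dl_le hG l _ _ (hne x z h3) (p.append q)
    intro w hw
    rcases SimpleGraph.Walk.mem_support_append_iff .. |>.1 hw with h | h
    · exact le_max_of_le_left (hp w h)
    · exact le_max_of_le_right (hq w h)
  intro c r hr
  by_cases hs : ∀ x ∈ Metric.ball c r, x = c
  · refine ⟨c, Metric.mem_ball_self hr, 0, le_rfl, ?_⟩
    ext x
    constructor
    · intro hx; exact Or.inr (hs x hx)
    · rintro (hx | hx)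
      · rw [dist_eq_zero.1 hx]; exact Metric.mem_ball_self hr
      · rw [hx]; exact Metric.mem_ball_self hr
  push Not at hs
  obtain ⟨u, hu, huc⟩ := hs
  have hball : ∀ x y w, x ∈ Metric.ball c r → y ∈ Metric.ball c r → dist x w ≤ dist x y →
      w ∈ Metric.ball c r := by
    intro x y w hx hy h
    rw [Metric.mem_ball] at *
    have h1 := hC w x c
    have h2 := hC x c y
    rw [dist_comm w x] at h1
    rw [dist_comm c y] at h2
    exact h1.trans_lt (max_lt (h.trans_lt (h2.trans_lt (max_lt hx hy))) hx)
  have hspos : 0 < dist u c := dist_pos.2 huc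
  have hfin : {w : X | dist u c ≤ l (Φ w)}.Finite := by
    obtain ⟨t, ht, hcov⟩ := Metric.totallyBounded_iff.1 htb (dist u c / 2) (by linarith)
    have : ∀ x : X, ∃ y ∈ t, dist x y < dist u c / 2 := by
      intro x
      simpa using hcov (Set.mem_univ x)
    choose f hf hf' using this
    refine Set.Finite.of_finite_image (f := f) (ht.subset ?_) ?_
    · rintro _ ⟨x, -, rfl⟩; exact hf x
    · intro x hx y _ hxy
      by_contra hne'
      have h1 := hA x y hne'
      have h2 := dist_triangle_right x y (f x)
      have h3 := hf' x
      have h4 := hf' y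
      rw [← hxy] at h4
      have h5 : dist u c ≤ l (Φ x) := hx
      linarith
  have hc := Metric.mem_ball_self (x := c) hr
  obtain ⟨w, hw, hwu⟩ := hB u c huc
  obtain ⟨p, ⟨hpl, hpB⟩, hpmax⟩ := Set.exists_max_image
    ({w : X | dist u c ≤ l (Φ w)} ∩ Metric.ball c r) (fun w => l (Φ w))
    (hfin.inter_of_left _) ⟨w, hw.ge, hball u c w hu hc hwu⟩
  have hle : ∀ x ∈ Metric.ball c r, ∀ y ∈ Metric.ball c r, x ≠ y → dist x y ≤ l (Φ p) := by
    intro x hx y hy hxy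
    obtain ⟨z, hz, hzx⟩ := hB x y hxy
    by_cases h : dist u c ≤ l (Φ z)
    · rw [← hz]; exact hpmax z ⟨h, hball x y z hx hy hzx⟩
    · rw [← hz]; exact (not_le.1 h).le.trans hpl
  have heq : ∀ x ∈ Metric.ball c r, x ≠ p → dist p x = l (Φ p) := fun x hx h =>
    le_antisymm (hle p hpB x hx h.symm) (hA p x h.symm)
  obtain ⟨y, hy, hyp⟩ : ∃ y ∈ Metric.ball c r, y ≠ p := by
    by_cases h : c = p
    · exact ⟨u, hu, h ▸ huc⟩
    · exact ⟨c, hc, h⟩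
  refine ⟨p, hpB, l (Φ p), hl0 _, ?_⟩
  ext x
  constructor
  · intro hx
    by_cases h : x = p
    · exact Or.inr h
    · left
      rw [Set.mem_setOf_eq, dist_comm]
      exact heq x hx h
  · rintro (hx | hx)
    · rw [Set.mem_setOf_eq, dist_comm] at hx
      exact hball p y x hpB hy (by rw [hx, heq y hy hyp])
    · rw [hx]; exact hpB
end

section
/- Let (X,d) be a UT-space with at least two points and let C(X) be its center of distances. Then C(X) = {0} holds if and only if (X,d) is weakly similar to an unbounded ultrametric space. -/
open scoped Classical ENNReal

universe u

/-- The distance set `D(X) = {d(x,y) : x,y ∈ X}` as a set of real numbers. -/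
def realDistSet (X : Type*) [MetricSpace X] : Set ℝ :=
  {t | ∃ x y : X, dist x y = t}

/-- `(X,d)` and `(Y,ρ)` are **weakly similar**: there is a bijection `Φ : X → Y` and a
strictly increasing bijection `f : D(Y) → D(X)` between the distance sets such that
`d(x,y) = f(ρ(Φ x, Φ y))` for all `x, y ∈ X`. -/
def WeaklySimilar (X : Type*) (Y : Type*) [MetricSpace X] [MetricSpace Y] : Prop :=
  ∃ Φ : X → Y, Function.Bijective Φ ∧
    ∃ f : realDistSet Y → realDistSet X, StrictMono f ∧ Function.Bijective f ∧
      ∀ x y : X, dist x y = (f ⟨dist (Φ x) (Φ y), ⟨Φ x, Φ y, rfl⟩⟩ : ℝ)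

/-- `(Y,ρ)` is an unbounded ultrametric space. -/
def IsUnboundedUltrametric (Y : Type*) [MetricSpace Y] : Prop :=
  IsUltrametricDist Y ∧ EMetric.diam (Set.univ : Set Y) = ⊤

theorem aux_foldr_init (L : List ℝ) (a : ℝ) : a ≤ L.foldr max a := by
  induction L with
  | nil => simp
  | cons b L ih => simp [ih]

theorem aux_foldr_mem (L : List ℝ) (a x : ℝ) (hx : x ∈ L) : x ≤ L.foldr max a := by
  induction L with
  | nil => simp at hx
  | cons b L ih =>
    rcases List.mem_cons.1 hx with rfl | h
    · simp
    · simp [ih h]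

theorem aux_foldr_le (L : List ℝ) (a c : ℝ) (ha : a ≤ c) (h : ∀ x ∈ L, x ≤ c) :
    L.foldr max a ≤ c := by
  induction L with
  | nil => simpa
  | cons b L ih =>
    simp only [List.foldr_cons, max_le_iff]
    exact ⟨h b (by simp), ih fun x hx => h x (by simp [hx])⟩

theorem aux_le_dl {V : Type*} {G : SimpleGraph V} (hG : G.IsTree) (l : V → ℝ)
    {u v : V} (h : u ≠ v) : l u ≤ dl hG l u v := by
  rw [dl, if_neg h]
  exact aux_foldr_init _ _

theorem aux_dl_le {V : Type*} {G : SimpleGraph V} (hG : G.IsTree) (l : V → ℝ)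
    {u v : V} (c : ℝ) (hc : 0 ≤ c) (p : G.Walk u v) (h : ∀ w ∈ p.support, l w ≤ c) :
    dl hG l u v ≤ c := by
  rw [dl]
  split_ifs with huv
  · exact hc
  · apply aux_foldr_le
    · exact h u p.start_mem_support
    · intro x hx
      obtain ⟨w, hw, rfl⟩ := List.mem_map.1 hx
      apply h w
      have h1 := (hG.existsUnique_path u v).unique
        (hG.existsUnique_path u v).exists.choose_spec p.bypass_isPath
      rw [h1] at hw
      exact p.support_bypass_subset hw

theorem aux_exists_path {V : Type*} {G : SimpleGraph V} (hG : G.IsTree) (l : V → ℝ)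
    {u v : V} (h : u ≠ v) : ∃ p : G.Walk u v, ∀ w ∈ p.support, l w ≤ dl hG l u v := by
  refine ⟨(hG.existsUnique_path u v).exists.choose, fun w hw => ?_⟩
  rw [dl, if_neg h]
  exact aux_foldr_mem _ _ _ (List.mem_map.2 ⟨w, hw, rfl⟩)

theorem aux_dl_ultra {V : Type*} {G : SimpleGraph V} (hG : G.IsTree) (l : V → ℝ)
    (hl : ∀ v, 0 ≤ l v) (u v w : V) :
    dl hG l u w ≤ max (dl hG l u v) (dl hG l v w) := by
  by_cases h1 : u = v
  · subst h1; exact le_max_right _ _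
  by_cases h2 : v = w
  · subst h2; exact le_max_left _ _
  obtain ⟨p, hp⟩ := aux_exists_path hG l h1
  obtain ⟨q, hq⟩ := aux_exists_path hG l h2
  apply aux_dl_le hG l _ _ (p.append q)
  · intro x hx
    rcases SimpleGraph.Walk.mem_support_append_iff _ _ |>.1 hx with h | h
    · exact (hp x h).trans (le_max_left _ _)
    · exact (hq x h).trans (le_max_right _ _)
  · exact ((hl u).trans (aux_le_dl hG l h1)).trans (le_max_left _ _)

theorem aux_ultra {X : Type u} [MetricSpace X] (hX : IsUTSpace X) : IsUltrametricDist X := by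
  obtain ⟨V, G, hG, l, hl, -, Φ, -, hd⟩ := hX
  refine ⟨fun x y z => ?_⟩
  simp only [hd]
  exact aux_dl_ultra hG l hl _ _ _

/-- if a distance is exceeded, it is not in the center. -/
theorem aux_not_center {X : Type u} [MetricSpace X] (hX : IsUTSpace X) (t : ℝ) (ht : 0 < t)
    (a b : X) (hab : t < dist a b) : ∃ p : X, ∀ x : X, dist p x ≠ t := by
  obtain ⟨V, G, hG, l, hl, -, Φ, hΦ, hd⟩ := hX
  by_contra! hcon
  have hlt : ∀ v, l v ≤ t := by
    intro v
    obtain ⟨p, rfl⟩ := hΦ.2 v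
    obtain ⟨x, hx⟩ := hcon p
    have : Φ p ≠ Φ x := by
      intro h
      have := hΦ.1 h
      subst this
      simp at hx
      linarith
    rw [← hx, hd]
    exact aux_le_dl hG l this
  obtain ⟨p⟩ := hG.1.preconnected (Φ a) (Φ b)
  have := aux_dl_le hG l t ht.le p (fun w _ => hlt w)
  rw [← hd] at this
  linarith

theorem aux_center_iff {X : Type u} [MetricSpace X] [Nontrivial X] (hX : IsUTSpace X) :
    centerOfDistances X = {0} ↔ ∀ a b : X, ∃ c d : X, dist a b < dist c d := by
  haveI := aux_ultra hX
  constructor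
  · intro h a b
    by_contra! hcon
    have hpos : 0 < dist a b := by
      obtain ⟨x, y, hxy⟩ := exists_pair_ne X
      exact (dist_pos.2 hxy).trans_le (hcon x y)
    have : edist a b ∈ centerOfDistances X := by
      refine ⟨⟨a, b, rfl⟩, fun p => ?_⟩
      have h1 := dist_triangle_max a p b
      rcases le_max_iff.1 h1 with h2 | h2
      · refine ⟨a, ?_⟩
        rw [edist_dist, edist_dist, dist_comm p a, le_antisymm (hcon a p) h2]
      · refine ⟨b, ?_⟩
        rw [edist_dist, edist_dist, le_antisymm (hcon p b) h2]
    rw [h] at this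
    have h3 : a = b := by simpa using this
    simp [h3] at hpos
  · intro h
    ext t
    simp only [Set.mem_singleton_iff]
    constructor
    · rintro ⟨⟨a, b, rfl⟩, hc⟩
      by_contra hne
      have hab : a ≠ b := by simpa using hne
      obtain ⟨c, d, hcd⟩ := h a b
      obtain ⟨p, hp⟩ := aux_not_center hX _ (dist_pos.2 hab) c d hcd
      obtain ⟨x, hx⟩ := hc p
      apply hp x
      rw [dist_edist, dist_edist, hx]
    · rintro rfl
      obtain ⟨x⟩ : Nonempty X := inferInstance
      exact ⟨⟨x, x, by simp⟩, fun p => ⟨p, by simp⟩⟩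

theorem aux_diam_top {Y : Type*} [MetricSpace Y] :
    EMetric.diam (Set.univ : Set Y) = ⊤ ↔ ∀ C : ℝ, ∃ a b : Y, C < dist a b := by
  have h1 : Bornology.IsBounded (Set.univ : Set Y) ↔ EMetric.diam (Set.univ : Set Y) ≠ ⊤ :=
    Metric.isBounded_iff_ediam_ne_top
  rw [← not_iff_not, ← ne_eq, ← h1, Metric.isBounded_iff]
  push Not
  simp

theorem aux_construct {X : Type u} [MetricSpace X] [IsUltrametricDist X] (s : ℝ)
    (hs : ∀ x y : X, dist x y < s) :
    ∃ (Y : Type u) (_ : MetricSpace Y) (e : X ≃ Y),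
      ∀ x y : X, dist (e x) (e y) = dist x y / (s - dist x y) := by
  have hmono : ∀ a b : ℝ, 0 ≤ a → a ≤ b → b < s → a / (s - a) ≤ b / (s - b) := by
    intro a b ha hab hb
    apply div_le_div₀ <;> linarith
  have hnn : ∀ x y : X, 0 ≤ dist x y / (s - dist x y) := fun x y =>
    div_nonneg dist_nonneg (sub_nonneg.2 (hs x y).le)
  let m : MetricSpace X :=
    { dist := fun x y => dist x y / (s - dist x y)
      dist_self := fun x => by simp
      dist_comm := fun x y => by simp [dist_comm]
      dist_triangle := fun x y z => by
        rcases le_max_iff.1 (dist_triangle_max x y z) with h | h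
        · have := hmono _ _ dist_nonneg h (hs _ _)
          have h2 := hnn y z
          linarith
        · have := hmono _ _ dist_nonneg h (hs _ _)
          have h2 := hnn x y
          linarith
      eq_of_dist_eq_zero := fun {x y} h => by
        have h1 := hs x y
        rcases div_eq_zero_iff.1 h with h | h
        · exact dist_eq_zero.1 h
        · linarith }
  exact ⟨X, m, Equiv.refl X, fun x y => rfl⟩

theorem aux_exists {X : Type u} [MetricSpace X] [Nontrivial X] [IsUltrametricDist X]
    (h : ∀ a b : X, ∃ c d : X, dist a b < dist c d) :
    ∃ (Y : Type u) (mY : MetricSpace Y),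
        @IsUnboundedUltrametric Y mY ∧ @WeaklySimilar X Y _ mY := by
  by_cases hb : ∀ C : ℝ, ∃ a b : X, C < dist a b
  · exact ⟨X, _, ⟨inferInstance, aux_diam_top.2 hb⟩, id, Function.bijective_id, id, strictMono_id,
      Function.bijective_id, fun x y => rfl⟩
  push Not at hb
  obtain ⟨C, hC⟩ := hb
  have hbdd : BddAbove (realDistSet X) := ⟨C, by rintro _ ⟨x, y, rfl⟩; exact hC x y⟩
  obtain ⟨s, hsdef⟩ : ∃ s, s = sSup (realDistSet X) := ⟨_, rfl⟩
  have hs : ∀ x y : X, dist x y < s := by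
    intro x y
    obtain ⟨c, d, hcd⟩ := h x y
    rw [hsdef]
    exact hcd.trans_le (le_csSup hbdd ⟨c, d, rfl⟩)
  obtain ⟨x0⟩ : Nonempty X := inferInstance
  have hs0 : 0 < s := by simpa using hs x0 x0
  obtain ⟨Y, mY, e, he⟩ := aux_construct s hs
  have hinv : ∀ x y : X, dist x y = s * dist (e x) (e y) / (1 + dist (e x) (e y)) := by
    intro x y
    rw [he]
    have : 0 < s - dist x y := sub_pos.2 (hs x y)
    field_simp
    ring
  refine ⟨Y, mY, ⟨⟨fun a b c => ?_⟩, aux_diam_top.2 fun C => ?_⟩, e, e.bijective,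
    fun r => ⟨s * r.1 / (1 + r.1), ?_⟩, ?_, ?_, hinv⟩
  · obtain ⟨x, rfl⟩ := e.surjective a
    obtain ⟨y, rfl⟩ := e.surjective b
    obtain ⟨z, rfl⟩ := e.surjective c
    have hmono : ∀ a b : ℝ, 0 ≤ a → a ≤ b → b < s → a / (s - a) ≤ b / (s - b) := by
      intro a b ha hab hb
      apply div_le_div₀ <;> linarith
    simp only [he, le_max_iff]
    rcases le_max_iff.1 (dist_triangle_max x y z) with h | h
    · exact .inl (hmono _ _ dist_nonneg h (hs _ _))
    · exact .inr (hmono _ _ dist_nonneg h (hs _ _))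
  · by_contra! hcon
    have hC0 : 0 ≤ C := dist_nonneg.trans (hcon (e x0) (e x0))
    have hle : s ≤ s * C / (1 + C) := by
      refine hsdef.le.trans (csSup_le ⟨dist x0 x0, x0, x0, rfl⟩ ?_)
      rintro _ ⟨x, y, rfl⟩
      rw [hinv, div_le_div_iff₀ (by positivity) (by positivity)]
      nlinarith [hcon (e x) (e y)]
    rw [le_div_iff₀ (by positivity)] at hle
    linarith
  · obtain ⟨a, b, hr⟩ := r.2
    obtain ⟨x, rfl⟩ := e.surjective a
    obtain ⟨y, rfl⟩ := e.surjective b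
    exact ⟨x, y, by rw [← hr]; exact hinv x y⟩
  · rintro ⟨r, a, b, rfl⟩ ⟨r', a', b', rfl⟩ hlt
    have hlt : dist a b < dist a' b' := hlt
    rw [← Subtype.coe_lt_coe]
    simp only
    rw [div_lt_div_iff₀ (by positivity) (by positivity)]
    nlinarith
  · constructor
    · rintro ⟨r, a, b, rfl⟩ ⟨r', a', b', rfl⟩ heq
      have heq := congrArg Subtype.val heq
      simp only at heq
      rw [div_eq_div_iff (by positivity) (by positivity)] at heq
      apply Subtype.ext
      simp only
      have : s * (dist a b - dist a' b') = 0 := by linarith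
      rcases mul_eq_zero.1 this with h | h <;> linarith
    · rintro ⟨t, x, y, rfl⟩
      exact ⟨⟨dist (e x) (e y), _, _, rfl⟩, Subtype.ext (hinv x y).symm⟩

/-- Let `(X,d)` be a UT-space with at least two points and let
`C(X)` be its center of distances.  Then `C(X) = {0}` holds if and only if `(X,d)` is
weakly similar to an unbounded ultrametric space. -/
theorem centerOfDistances_eq_zero_iff_weaklySimilar_unbounded
    {X : Type u} [MetricSpace X] [Nontrivial X] (hX : IsUTSpace X) :
    centerOfDistances X = {0} ↔
      ∃ (Y : Type u) (mY : MetricSpace Y),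
        @IsUnboundedUltrametric Y mY ∧ @WeaklySimilar X Y _ mY := by
  rw [aux_center_iff hX]
  haveI := aux_ultra hX
  constructor
  · exact aux_exists
  · rintro ⟨Y, mY, ⟨-, hd⟩, Φ, hΦ, f, hf, -, hfd⟩ a b
    obtain ⟨c, d, hcd⟩ := aux_diam_top.1 hd (dist (Φ a) (Φ b))
    obtain ⟨x, rfl⟩ := hΦ.2 c
    obtain ⟨y, rfl⟩ := hΦ.2 d
    refine ⟨x, y, ?_⟩
    rw [hfd, hfd]
    exact hf (Subtype.mk_lt_mk.2 hcd)
end
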